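/- Assume the projected overmaximised flow is invertible: id×π𝓗 : (t,ℓ) ↦ (t, π𝓗_t(ℓ)) is a homeomorphism of [0,T]×Λ onto a neighborhood 𝒰 of the graph of ξ̂ in [0,T]×ℝⁿ with locally Lipschitz inverse, where π(p,x):=x. Then ξ̂ minimizes the modified cost among nearby admissible trajectories: every admissible trajectory ξ on [0,T] whose graph is contained in 𝒰 satisfies c̃(ξ(T)) ≥ c̃(ξ̂(T)). (Optimality assertion of Theorem 4.1.) -/

import Mathlib

open MeasureTheory Set
open scoped InnerProductSpace NNReal

noncomputable section

/-- Euclidean state space. -/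
abbrev E (n : ℕ) := EuclideanSpace ℝ (Fin n)

/-- The standard simplex `Δ ⊆ ℝᵐ`. -/
def simplex (m : ℕ) : Set (Fin m → ℝ) :=
  {u | (∀ i, 0 ≤ u i) ∧ ∑ i, u i = 1}

/-- `𝒳(x)`: the closed convex hull of the values `X₁(x), …, X_m(x)`. -/
def chull {n m : ℕ} (X : Fin m → (E n → E n)) (x : E n) : Set (E n) :=
  {v | ∃ u ∈ simplex m, v = ∑ i, u i • X i x}

/-- Admissible trajectories of the differential inclusion `ξ̇ ∈ 𝒳(ξ)`, `ξ(0) = x₀`. -/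
def Admissible {n m : ℕ} (X : Fin m → (E n → E n)) (x₀ : E n) (T : ℝ)
    (ξ : ℝ → E n) : Prop :=
  (∃ K : ℝ≥0, LipschitzOnWith K ξ (Icc 0 T)) ∧ ξ 0 = x₀ ∧
    ∀ᵐ t, t ∈ Ioo 0 T → ∃ v ∈ chull X (ξ t), HasDerivAt ξ v t

/-- Hamiltonian vector field `⃗H = (−∂ₓH, ∂ₚH)` on `T*ℝⁿ ≃ ℝⁿ × ℝⁿ`, `ℓ = (p,x)`. -/
def hamVF {n : ℕ} (H : E n × E n → ℝ) (ℓ : E n × E n) : E n × E n :=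
  (-gradient (fun x => H (ℓ.1, x)) ℓ.2, gradient (fun p => H (p, ℓ.2)) ℓ.1)

/-!
On the tube swept out by the flow from `Λ` the Poincaré–Cartan form `p dx - H dt` is exact, with
primitive `W` equal to `-c̃` at time `T`. A competitor `η` in the tube is the projection of the
curve `t ↦ 𝓗_t(-∇c̃(y t), y t)` for a Lipschitz curve `y` of labels, and if `η` starts where `ξ̂`
does, then `y 0 = x̂_f`. The actions of `η` and `ξ̂` therefore differ by `c̃(x̂_f) - c̃(y T)`.
Overmaximality makes the action of `η` nonpositive, while that of `ξ̂` vanishes, and `y T = η T`.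

The flow is only Lipschitz, so exactness cannot be read off from the flow preserving the symplectic
form. Instead, `W` is differentiated along the lifted curve: writing `W` near a label `x` as an
explicit part plus the integral of a remainder that is `o(‖x' - x‖)` by Hamilton's equations,
dominated convergence shows that `W t` has differential `p dx` at every point of the tube, without
differentiating the flow in `x`.
-/

open Filter Topology Asymptotics

section LipschitzMaps

lemma lipschitzOnWith_diag_of_uncurry {X Y Z : Type*} [PseudoEMetricSpace X] [PseudoEMetricSpace Y]
    [PseudoEMetricSpace Z] {f : X → Y → Z} {g : X → Y} {s : Set X} {t : Set Y} {K L : ℝ≥0}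
    (hf : LipschitzOnWith K (Function.uncurry f) (s ×ˢ t)) (hg : LipschitzOnWith L g s)
    (hgt : MapsTo g s t) : LipschitzOnWith (K * max 1 L) (fun x => f x (g x)) s :=
  hf.comp (LipschitzWith.id.lipschitzOnWith.prodMk hg) fun _ hx => ⟨hx, hgt hx⟩

lemma lipschitzOnWith_slice_of_uncurry {X Y Z : Type*} [PseudoEMetricSpace X]
    [PseudoEMetricSpace Y] [PseudoEMetricSpace Z] {f : X → Y → Z} {s : Set X} {t : Set Y} {K : ℝ≥0}
    (hf : LipschitzOnWith K (Function.uncurry f) (s ×ˢ t)) {x : X} (hx : x ∈ s) :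
    LipschitzOnWith K (f x) t := by
  intro y hy y' hy'
  simpa [Prod.edist_eq] using hf (mk_mem_prod hx hy) (mk_mem_prod hx hy')

lemma exists_lipschitzOnWith_uncurry_comp {X Y Y' Z : Type*} [PseudoMetricSpace X]
    [PseudoMetricSpace Y] [PseudoMetricSpace Y'] [PseudoMetricSpace Z] {f : X → Y → Z} {g : Y' → Y}
    {s : Set X} {t : Set Y'} {K : ℝ≥0} (hs : IsCompact s) (ht : IsCompact t)
    (hf : LocallyLipschitzOn (s ×ˢ (g '' t)) (Function.uncurry f)) (hg : LipschitzOnWith K g t) :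
    ∃ L, LipschitzOnWith L (Function.uncurry fun x y => f x (g y)) (s ×ˢ t) := by
  obtain ⟨M, hM⟩ := hf.exists_lipschitzOnWith_of_compact
    (hs.prod (ht.image_of_continuousOn hg.continuousOn))
  have hprod : LipschitzOnWith (max 1 (K * 1)) (fun q : X × Y' => (q.1, g q.2)) (s ×ˢ t) :=
    LipschitzWith.prod_fst.lipschitzOnWith.prodMk
      (hg.comp LipschitzWith.prod_snd.lipschitzOnWith fun q hq => hq.2)
  exact ⟨_, hM.comp hprod fun q hq => ⟨hq.1, mem_image_of_mem g hq.2⟩⟩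

lemma norm_sub_le_of_lipschitzOnWith_uncurry {V F : Type*} [NormedAddCommGroup V]
    [NormedAddCommGroup F] {f : ℝ → V → F} {y : ℝ → V} {I : Set ℝ} {C : Set V} {K L : ℝ≥0}
    (hf : LipschitzOnWith K (Function.uncurry f) (I ×ˢ C)) (hy : LipschitzOnWith L y I)
    (hyC : MapsTo y I C) {t s r δ : ℝ} (ht : t ∈ I) (hs : s ∈ I) (hr : r ∈ I) (hst : |s - t| ≤ δ)
    (hrt : |r - t| ≤ δ) : ‖f s (y r) - f t (y t)‖ ≤ (K * max 1 L : ℝ≥0) * δ := by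
  have hδ : 0 ≤ δ := (abs_nonneg _).trans hst
  have hyrt : ‖y r - y t‖ ≤ L * δ := (hy.norm_sub_le hr ht).trans (by gcongr; exact hrt)
  calc ‖f s (y r) - f t (y t)‖ ≤ K * ‖(s, y r) - (t, y t)‖ :=
        hf.norm_sub_le (mk_mem_prod hs (hyC hr)) (mk_mem_prod ht (hyC ht))
    _ = K * max |s - t| ‖y r - y t‖ := rfl
    _ ≤ K * max (1 * δ) (L * δ) := by rw [one_mul]; gcongr
    _ = (K * max 1 L : ℝ≥0) * δ := by
        rw [← max_mul_of_nonneg _ _ hδ]; push_cast; ring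

variable {V W F : Type*} [NormedAddCommGroup V] [NormedSpace ℝ V] [NormedAddCommGroup F]

lemma hasFDerivWithinAt_zero_comp_of_lipschitzOnWith [NormedSpace ℝ F] [NormedAddCommGroup W]
    [NormedSpace ℝ W] {f : V → F} {g : W → V} {K : ℝ≥0}
    {s : Set W} {x : W} (hf : HasFDerivAt f (0 : V →L[ℝ] F) (g x)) (hg : LipschitzOnWith K g s)
    (hx : x ∈ s) :
    HasFDerivWithinAt (fun z => f (g z)) (0 : W →L[ℝ] F) s x := by
  have hgO : (fun z => g z - g x) =O[𝓝[s] x] (fun z => z - x) := by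
    refine IsBigO.of_bound K ?_
    filter_upwards [self_mem_nhdsWithin] with z hz using hg.norm_sub_le hz hx
  refine .of_isLittleO ?_
  simpa [Function.comp_def] using
    (hf.isLittleO.comp_tendsto (hg.continuousOn x hx)).trans_isBigO hgO

lemma continuousOn_of_eventually_norm_sub_le {V F : Type*} [NormedAddCommGroup V]
    [NormedAddCommGroup F] {C : Set V} {f : V → F} {B : ℝ}
    (hf : ∀ x ∈ C, ∀ᶠ z in 𝓝[C] x, ‖f z - f x‖ ≤ B * ‖z - x‖) : ContinuousOn f C := by
  intro x hx
  have hO : (fun z => f z - f x) =O[𝓝[C] x] (fun z => z - x) := IsBigO.of_bound B (hf x hx)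
  have hlim : Tendsto (fun z => z - x) (𝓝[C] x) (𝓝 0) :=
    tendsto_sub_nhds_zero_iff.2 tendsto_id |>.mono_left nhdsWithin_le_nhds
  exact tendsto_sub_nhds_zero_iff.1 (hO.trans_tendsto hlim)

-- Along a segment, `r ↦ ‖f (γ r) - f x‖` has right upper slope at most `B * ‖x' - x‖`.
lemma norm_sub_le_of_convex_of_eventually_norm_sub_le {C : Set V} (hC : Convex ℝ C) {f : V → F}
    {B : ℝ} (hf : ∀ x ∈ C, ∀ᶠ z in 𝓝[C] x, ‖f z - f x‖ ≤ B * ‖z - x‖)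
    {x x' : V} (hx : x ∈ C) (hx' : x' ∈ C) : ‖f x' - f x‖ ≤ B * ‖x' - x‖ := by
  set γ : ℝ → V := fun r => x + r • (x' - x) with hγ
  have hγC : MapsTo γ (Icc 0 1) C := fun r hr => hC.add_smul_sub_mem hx hx' hr
  have hγc : Continuous γ := by fun_prop
  have hfc : ContinuousOn f C := continuousOn_of_eventually_norm_sub_le hf
  have slope_le : ∀ r ∈ Ico (0 : ℝ) 1, ∀ᶠ s in 𝓝[>] r,
      slope (fun r => ‖f (γ r) - f x‖) r s ≤ B * ‖x' - x‖ := by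
    intro r hr
    have hright : 𝓝[>] r ≤ 𝓝[Icc 0 1] r := by
      rw [← nhdsWithin_Ioc_eq_nhdsGT hr.2]
      exact nhdsWithin_mono _ fun s hs => ⟨hr.1.trans hs.1.le, hs.2⟩
    have hγr : Tendsto γ (𝓝[>] r) (𝓝[C] (γ r)) :=
      (hγc.continuousWithinAt.tendsto_nhdsWithin hγC).mono_left hright
    filter_upwards [hγr.eventually (hf _ (hγC ⟨hr.1, hr.2.le⟩)), self_mem_nhdsWithin] with s hs hrs
    have hrs' : 0 < s - r := sub_pos.2 hrs
    have hγsub : ‖γ s - γ r‖ = (s - r) * ‖x' - x‖ := by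
      rw [show γ s - γ r = (s - r) • (x' - x) by simp only [hγ]; module, norm_smul,
        Real.norm_of_nonneg hrs'.le]
    rw [slope_def_field, div_le_iff₀ hrs']
    calc ‖f (γ s) - f x‖ - ‖f (γ r) - f x‖ ≤ ‖f (γ s) - f (γ r)‖ := by
          simpa using norm_sub_norm_le (f (γ s) - f x) (f (γ r) - f x)
      _ ≤ B * ‖γ s - γ r‖ := hs
      _ = B * ‖x' - x‖ * (s - r) := by rw [hγsub]; ring
  have key := image_le_of_liminf_slope_right_le_deriv_boundary
    (f := fun r => ‖f (γ r) - f x‖) (B := fun r => r * (B * ‖x' - x‖))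
    ((hfc.comp hγc.continuousOn hγC).sub continuousOn_const).norm (by simp [hγ]) (by fun_prop)
    (fun r _ => ((hasDerivAt_id r).mul_const (B * ‖x' - x‖)).hasDerivWithinAt)
    (fun r hr ρ hρ => ((slope_le r hr).mono fun s hs => hs.trans_lt (by simpa using hρ)).frequently)
  simpa [hγ] using key (right_mem_Icc.2 zero_le_one)

lemma exists_isCompact_convex_between [FiniteDimensional ℝ V] {O S : Set V} (hO : IsOpen O)
    (hOc : Convex ℝ O) (hS : IsCompact S) (hSO : S ⊆ O) :
    ∃ P, IsCompact P ∧ Convex ℝ P ∧ S ⊆ interior P ∧ P ⊆ O := by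
  have polytope_nhds : ∀ x ∈ S, ∃ u : Finset V, x ∈ interior (convexHull ℝ (u : Set V)) ∧
      convexHull ℝ (u : Set V) ⊆ O := by
    intro x hx
    obtain ⟨u, hu, huO⟩ := (convex_singleton (𝕜 := ℝ) x)
      |>.exists_subset_interior_convexHull_finset_of_isCompact isCompact_singleton
        (by rw [nhdsSet_singleton]; exact hO.mem_nhds (hSO hx))
    exact ⟨u, hu rfl, huO⟩
  choose! u hxu huO using polytope_nhds
  obtain ⟨F, hFS, hSF⟩ := hS.elim_nhds_subcover (fun x => interior (convexHull ℝ (u x : Set V)))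
    fun x hx => isOpen_interior.mem_nhds (hxu x hx)
  have hfin : (⋃ x ∈ F, (u x : Set V)).Finite :=
    F.finite_toSet.biUnion fun x _ => (u x).finite_toSet
  refine ⟨convexHull ℝ (⋃ x ∈ F, (u x : Set V)), hfin.isCompact_convexHull ℝ,
    convex_convexHull ℝ _, hSF.trans (iUnion₂_subset fun x hx => interior_mono <|
      convexHull_mono (subset_biUnion_of_mem (u := fun x => (u x : Set V)) hx)),
    convexHull_min (iUnion₂_subset fun x hx => ?_) hOc⟩
  exact (subset_convexHull ℝ _).trans (huO x (hFS x hx))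

end LipschitzMaps

section LipschitzCurves

lemma ae_mem_Ioo_of_mem_Icc (a b : ℝ) : ∀ᵐ t : ℝ, t ∈ Icc a b → t ∈ Ioo a b :=
  Ioo_ae_eq_Icc.mem_iff.mono fun _ h => h.2

lemma ae_deriv_eq_of_eqOn_Icc {F : Type*} [NormedAddCommGroup F] [NormedSpace ℝ F] {a b : ℝ}
    {f g : ℝ → F} (hfg : EqOn f g (Icc a b)) :
    ∀ᵐ t : ℝ, t ∈ Icc a b → deriv f t = deriv g t := by
  filter_upwards [ae_mem_Ioo_of_mem_Icc a b] with t hmem ht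
  exact (hfg.eventuallyEq_of_mem (Icc_mem_nhds (hmem ht).1 (hmem ht).2)).deriv_eq

lemma ae_hasDerivAt_and_norm_deriv_le_of_lipschitzOnWith {F : Type*}
    [NormedAddCommGroup F] [NormedSpace ℝ F] [FiniteDimensional ℝ F] {a b : ℝ} {q : ℝ → F} {K : ℝ≥0}
    (hq : LipschitzOnWith K q (Icc a b)) :
    ∀ᵐ t : ℝ, t ∈ Icc a b → HasDerivAt q (deriv q t) t ∧ ‖deriv q t‖ ≤ K := by
  filter_upwards [ae_mem_Ioo_of_mem_Icc a b, hq.ae_differentiableWithinAt_of_mem_real]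
    with t hmem hdiff ht
  have hnhds : Icc a b ∈ 𝓝 t := Icc_mem_nhds (hmem ht).1 (hmem ht).2
  exact ⟨((hdiff ht).differentiableAt hnhds).hasDerivAt, norm_deriv_le_of_lipschitzOn hnhds hq⟩

variable {V : Type*} [NormedAddCommGroup V] [InnerProductSpace ℝ V] [FiniteDimensional ℝ V]
  {a b : ℝ} {p q : ℝ → V} {K L : ℝ≥0}

lemma intervalIntegrable_inner_deriv (hp : ContinuousOn p (uIcc a b))
    (hq : LipschitzOnWith K q (uIcc a b)) :
    IntervalIntegrable (fun t => ⟪p t, deriv q t⟫_ℝ) volume a b := by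
  obtain ⟨B, hB⟩ := isCompact_uIcc.exists_bound_of_continuousOn hp
  rw [intervalIntegrable_iff]
  refine IntegrableOn.of_bound (by simp [uIoc]) ?_ (B * K) ?_
  · exact ((hp.mono uIoc_subset_uIcc).aestronglyMeasurable measurableSet_uIoc).inner (𝕜 := ℝ)
      (stronglyMeasurable_deriv q).aestronglyMeasurable
  · rw [ae_restrict_iff' measurableSet_uIoc]
    filter_upwards [ae_hasDerivAt_and_norm_deriv_le_of_lipschitzOnWith hq] with t hq' ht
    have ht' := uIoc_subset_uIcc ht
    exact (norm_inner_le_norm _ _).trans <|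
      mul_le_mul (hB t ht') (hq' ht').2 (norm_nonneg _) ((norm_nonneg _).trans (hB t ht'))

lemma integral_inner_deriv_add_inner_deriv (hp : LipschitzOnWith K p (uIcc a b))
    (hq : LipschitzOnWith L q (uIcc a b)) :
    ∫ t in a..b, (⟪p t, deriv q t⟫_ℝ + ⟪q t, deriv p t⟫_ℝ) = ⟪p b, q b⟫_ℝ - ⟪p a, q a⟫_ℝ := by
  obtain ⟨M, hM⟩ : ∃ M, LipschitzOnWith M (fun t => ⟪p t, q t⟫_ℝ) (uIcc a b) := by
    have hpq := hp.prodMk hq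
    obtain ⟨M, hM⟩ := (contDiff_inner (𝕜 := ℝ) (n := 1)).locallyLipschitz.locallyLipschitzOn
      |>.exists_lipschitzOnWith_of_compact (isCompact_uIcc.image_of_continuousOn hpq.continuousOn)
    exact ⟨_, hM.comp hpq (mapsTo_image _ _)⟩
  rw [← hM.absolutelyContinuousOnInterval.integral_deriv_eq_sub]
  refine intervalIntegral.integral_congr_ae ?_
  filter_upwards [ae_hasDerivAt_and_norm_deriv_le_of_lipschitzOnWith hp,
    ae_hasDerivAt_and_norm_deriv_le_of_lipschitzOnWith hq] with t hp' hq' ht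
  have ht' := uIoc_subset_uIcc ht
  rw [((hp' ht').1.inner ℝ (hq' ht').1).deriv, real_inner_comm (q t)]

lemma abs_integral_inner_deriv_sub_inner_le (hp : ContinuousOn p (uIcc a b))
    (hq : LipschitzOnWith K q (uIcc a b)) {p₀ : V} {δ : ℝ}
    (hδ : ∀ t ∈ uIcc a b, ‖p t - p₀‖ ≤ δ) :
    |(∫ t in a..b, ⟪p t, deriv q t⟫_ℝ) - ⟪p₀, q b - q a⟫_ℝ| ≤ δ * K * |b - a| := by
  have hconst : ∫ t in a..b, ⟪p₀, deriv q t⟫_ℝ = ⟪p₀, q b - q a⟫_ℝ := by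
    simpa [inner_sub_right] using
      integral_inner_deriv_add_inner_deriv (LipschitzWith.const p₀).lipschitzOnWith hq
  rw [← hconst, ← intervalIntegral.integral_sub (intervalIntegrable_inner_deriv hp hq)
    (intervalIntegrable_inner_deriv continuousOn_const hq), ← Real.norm_eq_abs]
  refine intervalIntegral.norm_integral_le_of_norm_le_const_ae ?_
  filter_upwards [ae_hasDerivAt_and_norm_deriv_le_of_lipschitzOnWith hq] with t hq' ht
  have ht' := uIoc_subset_uIcc ht
  rw [← inner_sub_left]
  exact (norm_inner_le_norm _ _).trans <|
    mul_le_mul (hδ t ht') (hq' ht').2 (norm_nonneg _) ((norm_nonneg _).trans (hδ t ht'))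

end LipschitzCurves

section HamiltonianVectorField

variable {n : ℕ} {H : E n × E n → ℝ} {Ω : Set (E n × E n)} {ℓ : E n × E n}

lemma hamVF_eq_toDual_symm (hH : DifferentiableAt ℝ H ℓ) :
    hamVF H ℓ =
      (-(InnerProductSpace.toDual ℝ (E n)).symm ((fderiv ℝ H ℓ).comp (.inr ℝ (E n) (E n))),
        (InnerProductSpace.toDual ℝ (E n)).symm ((fderiv ℝ H ℓ).comp (.inl ℝ (E n) (E n)))) := by
  have hsnd : HasFDerivAt (fun x => H (ℓ.1, x)) ((fderiv ℝ H ℓ).comp (.inr ℝ (E n) (E n))) ℓ.2 :=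
    HasFDerivAt.comp ℓ.2 hH.hasFDerivAt (hasFDerivAt_prodMk_right ℓ.1 ℓ.2)
  have hfst : HasFDerivAt (fun p => H (p, ℓ.2)) ((fderiv ℝ H ℓ).comp (.inl ℝ (E n) (E n))) ℓ.1 :=
    HasFDerivAt.comp ℓ.1 hH.hasFDerivAt (hasFDerivAt_prodMk_left ℓ.1 ℓ.2)
  simp only [hamVF, gradient, hsnd.fderiv, hfst.fderiv]

lemma fderiv_eq_inner_hamVF (hH : DifferentiableAt ℝ H ℓ) (v : E n × E n) :
    fderiv ℝ H ℓ v = ⟪(hamVF H ℓ).2, v.1⟫_ℝ - ⟪(hamVF H ℓ).1, v.2⟫_ℝ := by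
  simp only [hamVF_eq_toDual_symm hH, inner_neg_left, InnerProductSpace.toDual_symm_apply,
    ContinuousLinearMap.comp_apply, ContinuousLinearMap.inl_apply, ContinuousLinearMap.inr_apply,
    sub_neg_eq_add, ← map_add, Prod.mk_add_mk, add_zero, zero_add]

lemma continuousOn_hamVF (hΩ : IsOpen Ω) (hH : ContDiffOn ℝ 1 H Ω) :
    ContinuousOn (hamVF H) Ω := by
  have hfderiv := hH.continuousOn_fderiv_of_isOpen hΩ le_rfl
  have hdual (j : E n →L[ℝ] E n × E n) : ContinuousOn
      (fun ℓ => (InnerProductSpace.toDual ℝ (E n)).symm ((fderiv ℝ H ℓ).comp j)) Ω :=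
    (InnerProductSpace.toDual ℝ (E n)).symm.continuous.comp_continuousOn
      (hfderiv.clm_comp continuousOn_const)
  refine ((hdual (.inr ℝ (E n) (E n))).neg.prodMk (hdual (.inl ℝ (E n) (E n)))).congr
    fun ℓ hℓ => ?_
  exact hamVF_eq_toDual_symm ((hH.contDiffAt (hΩ.mem_nhds hℓ)).differentiableAt one_ne_zero)

lemma abs_inner_fst_snd_le {V : Type*} [NormedAddCommGroup V] [InnerProductSpace ℝ V]
    (v w : V × V) : |⟪v.1, w.2⟫_ℝ| ≤ ‖v‖ * ‖w‖ :=
  (abs_real_inner_le_norm _ _).trans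
    (mul_le_mul (norm_fst_le v) (norm_snd_le w) (norm_nonneg _) (norm_nonneg _))

lemma norm_fderiv_le_two_mul_norm_hamVF (hH : DifferentiableAt ℝ H ℓ) :
    ‖fderiv ℝ H ℓ‖ ≤ 2 * ‖hamVF H ℓ‖ := by
  refine ContinuousLinearMap.opNorm_le_bound _ (by positivity) fun v => ?_
  rw [fderiv_eq_inner_hamVF hH, Real.norm_eq_abs, real_inner_comm]
  linarith [abs_sub ⟪v.1, (hamVF H ℓ).2⟫_ℝ ⟪(hamVF H ℓ).1, v.2⟫_ℝ,
    abs_inner_fst_snd_le v (hamVF H ℓ), abs_inner_fst_snd_le (hamVF H ℓ) v]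

/-- The second-order error made when the Poincaré–Cartan integrands `⟪p, ẋ⟫ - H` of two solutions
of the Hamiltonian system, through `ℓ` and `ℓ'` at a common time, are compared up to the exact
derivative `d/dt ⟪p, x' - x⟫`. -/
def cartanRemainder (H : E n × E n → ℝ) (ℓ ℓ' : E n × E n) : ℝ :=
  ⟪ℓ'.1 - ℓ.1, (hamVF H ℓ').2⟫_ℝ - ⟪(hamVF H ℓ).1, ℓ'.2 - ℓ.2⟫_ℝ - (H ℓ' - H ℓ)

lemma hasFDerivAt_cartanRemainder (hΩ : IsOpen Ω) (hH : ContDiffOn ℝ 1 H Ω) (hℓ : ℓ ∈ Ω) :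
    HasFDerivAt (cartanRemainder H ℓ) (0 : E n × E n →L[ℝ] ℝ) ℓ := by
  have hd : DifferentiableAt ℝ H ℓ := (hH.contDiffAt (hΩ.mem_nhds hℓ)).differentiableAt one_ne_zero
  have hVF : Tendsto (fun z => hamVF H z - hamVF H ℓ) (𝓝 ℓ) (𝓝 0) :=
    tendsto_sub_nhds_zero_iff.2 ((continuousOn_hamVF hΩ hH).continuousAt (hΩ.mem_nhds hℓ))
  have hinner : (fun z => ⟪z.1 - ℓ.1, (hamVF H z).2 - (hamVF H ℓ).2⟫_ℝ)
      =o[𝓝 ℓ] fun z => z - ℓ := by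
    have hprod : (fun z => ‖z - ℓ‖ * ‖hamVF H z - hamVF H ℓ‖) =o[𝓝 ℓ] fun z => ‖z - ℓ‖ * 1 :=
      (isBigO_refl _ _).mul_isLittleO
        ((isLittleO_one_iff ℝ).2 (tendsto_zero_iff_norm_tendsto_zero.1 hVF))
    simp only [mul_one] at hprod
    refine (IsBigO.of_norm_le fun z => ?_).trans_isLittleO hprod.of_norm_right
    simpa using abs_inner_fst_snd_le (z - ℓ) (hamVF H z - hamVF H ℓ)
  refine .of_isLittleO ((hinner.sub hd.hasFDerivAt.isLittleO).congr_left fun z => ?_)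
  simp only [cartanRemainder, fderiv_eq_inner_hamVF hd, inner_sub_right, inner_sub_left,
    Prod.fst_sub, Prod.snd_sub, real_inner_comm (hamVF H ℓ).2, sub_self, inner_zero_right,
    zero_apply]
  ring

lemma abs_cartanRemainder_le (ℓ' : E n × E n) :
    |cartanRemainder H ℓ ℓ'| ≤ (‖hamVF H ℓ'‖ + ‖hamVF H ℓ‖) * ‖ℓ' - ℓ‖ + |H ℓ' - H ℓ| := by
  have hfst := abs_inner_fst_snd_le (ℓ' - ℓ) (hamVF H ℓ')
  have hsnd := abs_inner_fst_snd_le (hamVF H ℓ) (ℓ' - ℓ)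
  simp only [Prod.fst_sub, Prod.snd_sub] at hfst hsnd
  unfold cartanRemainder
  linarith [abs_sub (⟪ℓ'.1 - ℓ.1, (hamVF H ℓ').2⟫_ℝ - ⟪(hamVF H ℓ).1, ℓ'.2 - ℓ.2⟫_ℝ) (H ℓ' - H ℓ),
    abs_sub ⟪ℓ'.1 - ℓ.1, (hamVF H ℓ').2⟫_ℝ ⟪(hamVF H ℓ).1, ℓ'.2 - ℓ.2⟫_ℝ]

lemma abs_sub_le_of_norm_hamVF_le {V : Type*} [NormedAddCommGroup V] [NormedSpace ℝ V] {C : Set V}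
    (hC : Convex ℝ C) {a : V → E n × E n} {K : ℝ≥0} (ha : LipschitzOnWith K a C)
    (hH : ∀ x ∈ C, DifferentiableAt ℝ H (a x)) {B : ℝ} (hB : ∀ x ∈ C, ‖hamVF H (a x)‖ ≤ B)
    {x x' : V} (hx : x ∈ C) (hx' : x' ∈ C) :
    |H (a x') - H (a x)| ≤ (2 * B + 1) * K * ‖x' - x‖ := by
  refine norm_sub_le_of_convex_of_eventually_norm_sub_le hC (f := fun x => H (a x))
    (fun x hx => ?_) hx hx'
  have hBx := hB x hx
  filter_upwards [(ha.continuousOn x hx).eventually ((hH x hx).hasFDerivAt.isLittleO.bound one_pos),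
    self_mem_nhdsWithin] with z hz hzC
  calc ‖H (a z) - H (a x)‖
      = ‖(H (a z) - H (a x) - fderiv ℝ H (a x) (a z - a x)) + fderiv ℝ H (a x) (a z - a x)‖ := by
        rw [sub_add_cancel]
    _ ≤ 1 * ‖a z - a x‖ + 2 * ‖hamVF H (a x)‖ * ‖a z - a x‖ :=
        norm_add_le_of_le hz (ContinuousLinearMap.le_of_opNorm_le _
          (norm_fderiv_le_two_mul_norm_hamVF (hH x hx)) _)
    _ = (2 * ‖hamVF H (a x)‖ + 1) * ‖a z - a x‖ := by ring
    _ ≤ (2 * B + 1) * (K * ‖z - x‖) := by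
        have := (norm_nonneg _).trans hBx
        gcongr
        exact ha.norm_sub_le hzC hx
    _ = (2 * B + 1) * K * ‖z - x‖ := by ring

end HamiltonianVectorField

section Action

variable {n : ℕ}

/-- The integral of the Poincaré–Cartan form `p dx - H dt` along a curve of the cotangent bundle. -/
def action (H : ℝ → E n × E n → ℝ) (lam : ℝ → E n × E n) (a b : ℝ) : ℝ :=
  ∫ s in a..b, (⟪(lam s).1, deriv (fun τ => (lam τ).2) s⟫_ℝ - H s (lam s))

lemma aestronglyMeasurable_comp_curve {T : ℝ} {Ω : Set (E n × E n)} {H : ℝ → E n × E n → ℝ}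
    (hHm : ∀ ℓ ∈ Ω, Measurable fun t => H t ℓ) (hHc : ∀ t ∈ Icc 0 T, ContinuousOn (H t) Ω)
    {lam : ℝ → E n × E n} (hlam : ContinuousOn lam (Icc 0 T)) (hlamΩ : MapsTo lam (Icc 0 T) Ω) :
    AEStronglyMeasurable (fun t => H t (lam t)) (volume.restrict (Icc 0 T)) := by
  have huncurry : Measurable (Function.uncurry fun (ℓ : Ω) (t : Icc (0 : ℝ) T) => H t ℓ) :=
    measurable_uncurry_of_continuous_of_measurable (fun t => (hHc t t.2).domRestrict)
      fun ℓ => (hHm ℓ ℓ.2).comp measurable_subtype_coe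
  have hgraph : Measurable fun t : Icc (0 : ℝ) T => ((⟨lam t, hlamΩ t.2⟩ : Ω), t) :=
    (hlam.domRestrict.measurable.subtype_mk).prodMk measurable_id
  exact (aemeasurable_restrict_of_measurable_subtype (f := fun t => H t (lam t)) measurableSet_Icc
    (huncurry.comp hgraph)).aestronglyMeasurable

end Action

/-- A family of integral curves `t ↦ A t x` of the Hamiltonian system of `H`, parametrised in a
Lipschitz way by the points `x` of an open convex set `C`. Integrability of `H` is required along
one curve only: it propagates to the others. -/
structure HamiltonianTube {n : ℕ} (T : ℝ) (Ω : Set (E n × E n)) (H : ℝ → E n × E n → ℝ) (K : ℝ≥0)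
    (C : Set (E n)) (A : ℝ → E n → E n × E n) : Prop where
  isOpen_base : IsOpen C
  convex_base : Convex ℝ C
  isOpen_phase : IsOpen Ω
  measurable_ham : ∀ ℓ ∈ Ω, Measurable fun t => H t ℓ
  contDiffOn_ham : ∀ t ∈ Icc 0 T, ContDiffOn ℝ 1 (H t) Ω
  mem_phase : ∀ t ∈ Icc 0 T, ∀ x ∈ C, A t x ∈ Ω
  lipschitz : LipschitzOnWith K (Function.uncurry A) (Icc 0 T ×ˢ C)
  ae_hasDerivAt : ∀ x ∈ C, ∀ᵐ t, t ∈ Icc 0 T →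
    HasDerivAt (fun s => A s x) (hamVF (H t) (A t x)) t
  exists_intervalIntegrable : ∃ x ∈ C, IntervalIntegrable (fun s => H s (A s x)) volume 0 T

namespace HamiltonianTube

variable {n : ℕ} {T : ℝ} {Ω : Set (E n × E n)} {H : ℝ → E n × E n → ℝ} {K L : ℝ≥0}
  {C : Set (E n)} {A : ℝ → E n → E n × E n} {y : ℝ → E n} {x x' : E n} {a b t : ℝ}

lemma continuousOn_lift (h : HamiltonianTube T Ω H K C A) (hy : ContinuousOn y (Icc 0 T))
    (hyC : MapsTo y (Icc 0 T) C) : ContinuousOn (fun s => A s (y s)) (Icc 0 T) :=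
  h.lipschitz.continuousOn.comp (continuousOn_id.prodMk hy) fun _ hs => ⟨hs, hyC hs⟩

lemma lipschitzOnWith_lift (h : HamiltonianTube T Ω H K C A) (hy : LipschitzOnWith L y (Icc 0 T))
    (hyC : MapsTo y (Icc 0 T) C) :
    LipschitzOnWith (K * max 1 L) (fun s => A s (y s)) (Icc 0 T) :=
  lipschitzOnWith_diag_of_uncurry h.lipschitz hy hyC

lemma lipschitzOnWith_curve (h : HamiltonianTube T Ω H K C A) (hx : x ∈ C) :
    LipschitzOnWith K (fun s => A s x) (Icc 0 T) := by
  simpa using h.lipschitzOnWith_lift (LipschitzWith.const x).lipschitzOnWith fun _ _ => hx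

lemma lipschitzOnWith_slice (h : HamiltonianTube T Ω H K C A) (ht : t ∈ Icc 0 T) :
    LipschitzOnWith K (A t) C :=
  lipschitzOnWith_slice_of_uncurry h.lipschitz ht

lemma differentiableAt_ham (h : HamiltonianTube T Ω H K C A) (ht : t ∈ Icc 0 T) (hx : x ∈ C) :
    DifferentiableAt ℝ (H t) (A t x) :=
  ((h.contDiffOn_ham t ht).contDiffAt
    (h.isOpen_phase.mem_nhds (h.mem_phase t ht x hx))).differentiableAt one_ne_zero

-- The exceptional null set is uniform in `x` by continuity in `x` and separability of `C`.
lemma ae_norm_hamVF_le (h : HamiltonianTube T Ω H K C A) :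
    ∀ᵐ t, t ∈ Icc 0 T → ∀ x ∈ C, ‖hamVF (H t) (A t x)‖ ≤ K := by
  obtain ⟨S, hScount, hSdense⟩ := TopologicalSpace.exists_countable_dense C
  have hS : ∀ᵐ t, ∀ x ∈ S, t ∈ Icc 0 T →
      HasDerivAt (fun s => A s x) (hamVF (H t) (A t x)) t :=
    (ae_ball_iff hScount).2 fun x _ => h.ae_hasDerivAt x x.2
  filter_upwards [hS, ae_mem_Ioo_of_mem_Icc 0 T] with t hderiv hmem ht x hx
  have hcont : Continuous fun x : C => ‖hamVF (H t) (A t x)‖ :=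
    continuous_norm.comp ((continuousOn_hamVF h.isOpen_phase (h.contDiffOn_ham t ht)).comp
      (h.lipschitzOnWith_slice ht).continuousOn (h.mem_phase t ht)).domRestrict
  exact hSdense.induction (P := fun z : C => ‖hamVF (H t) (A t z)‖ ≤ K)
    (fun z hz => (hderiv z hz ht).le_of_lipschitzOn (Icc_mem_nhds (hmem ht).1 (hmem ht).2)
      (h.lipschitzOnWith_curve z.2))
    (isClosed_le hcont continuous_const) ⟨x, hx⟩

lemma ae_abs_ham_sub_le (h : HamiltonianTube T Ω H K C A) :
    ∀ᵐ t, t ∈ Icc 0 T → ∀ x ∈ C, ∀ x' ∈ C,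
      |H t (A t x') - H t (A t x)| ≤ (2 * K + 1) * K * ‖x' - x‖ := by
  filter_upwards [h.ae_norm_hamVF_le] with t hVF ht x hx x' hx'
  exact abs_sub_le_of_norm_hamVF_le h.convex_base (h.lipschitzOnWith_slice ht)
    (fun z hz => h.differentiableAt_ham ht hz) (hVF ht) hx hx'

lemma intervalIntegrable_ham (h : HamiltonianTube T Ω H K C A) (hy : ContinuousOn y (Icc 0 T))
    (hyC : MapsTo y (Icc 0 T) C) (ha : a ∈ Icc 0 T) (hb : b ∈ Icc 0 T) :
    IntervalIntegrable (fun s => H s (A s (y s))) volume a b := by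
  obtain ⟨x₀, hx₀, hint⟩ := h.exists_intervalIntegrable
  have hT : 0 ≤ T := ha.1.trans ha.2
  have hsub : uIcc a b ⊆ Icc 0 T := uIcc_subset_Icc ha hb
  have hmeas {z : ℝ → E n} (hz : ContinuousOn z (Icc 0 T)) (hzC : MapsTo z (Icc 0 T) C) :=
    aestronglyMeasurable_comp_curve h.measurable_ham
      (fun t ht => (h.contDiffOn_ham t ht).continuousOn) (h.continuousOn_lift hz hzC)
      fun s hs => h.mem_phase s hs _ (hzC hs)
  obtain ⟨R, hR⟩ := isCompact_Icc.exists_bound_of_continuousOn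
    (hy.sub (continuousOn_const (c := x₀)))
  have hdiff : IntegrableOn (fun s => H s (A s (y s)) - H s (A s x₀)) (Icc 0 T) := by
    refine IntegrableOn.of_bound (by simp) ((hmeas hy hyC).sub
      (hmeas continuousOn_const fun _ _ => hx₀)) ((2 * K + 1) * K * R) ?_
    rw [ae_restrict_iff' measurableSet_Icc]
    filter_upwards [h.ae_abs_ham_sub_le] with s hs hsI
    refine (hs hsI x₀ hx₀ _ (hyC hsI)).trans ?_
    gcongr
    exact hR s hsI
  have hint' : IntegrableOn (fun s => H s (A s x₀)) (Icc 0 T) :=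
    (intervalIntegrable_iff_integrableOn_Icc_of_le hT).1 hint
  have hsum : IntervalIntegrable (fun s => H s (A s (y s))) volume 0 T := by
    rw [intervalIntegrable_iff_integrableOn_Icc_of_le hT]
    simpa only [Pi.add_def, sub_add_cancel] using hdiff.add hint'
  exact hsum.mono_set (by rwa [uIcc_of_le hT])

lemma intervalIntegrable_inner_deriv_lift (h : HamiltonianTube T Ω H K C A)
    (hy : LipschitzOnWith L y (Icc 0 T)) (hyC : MapsTo y (Icc 0 T) C) (ha : a ∈ Icc 0 T)
    (hb : b ∈ Icc 0 T) :
    IntervalIntegrable (fun s => ⟪(A s (y s)).1, deriv (fun τ => (A τ (y τ)).2) s⟫_ℝ)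
      volume a b := by
  have hlift := (h.lipschitzOnWith_lift hy hyC).mono (uIcc_subset_Icc ha hb)
  exact intervalIntegrable_inner_deriv (continuous_fst.comp_continuousOn hlift.continuousOn)
    (LipschitzWith.prod_snd.comp_lipschitzOnWith hlift)

lemma intervalIntegrable_action (h : HamiltonianTube T Ω H K C A)
    (hy : LipschitzOnWith L y (Icc 0 T)) (hyC : MapsTo y (Icc 0 T) C) (ha : a ∈ Icc 0 T)
    (hb : b ∈ Icc 0 T) :
    IntervalIntegrable (fun s => ⟪(A s (y s)).1, deriv (fun τ => (A τ (y τ)).2) s⟫_ℝ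
      - H s (A s (y s))) volume a b :=
  (h.intervalIntegrable_inner_deriv_lift hy hyC ha hb).sub
    (h.intervalIntegrable_ham hy.continuousOn hyC ha hb)

lemma action_add_adjacent (h : HamiltonianTube T Ω H K C A) (hy : LipschitzOnWith L y (Icc 0 T))
    (hyC : MapsTo y (Icc 0 T) C) {d : ℝ} (ha : a ∈ Icc 0 T) (hb : b ∈ Icc 0 T)
    (hd : d ∈ Icc 0 T) :
    action H (fun s => A s (y s)) a b + action H (fun s => A s (y s)) b d =
      action H (fun s => A s (y s)) a d :=
  intervalIntegral.integral_add_adjacent_intervals (h.intervalIntegrable_action hy hyC ha hb)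
    (h.intervalIntegrable_action hy hyC hb hd)

lemma intervalIntegrable_inner_deriv_curve_sub (h : HamiltonianTube T Ω H K C A) (hx : x ∈ C)
    (hx' : x' ∈ C) (ha : a ∈ Icc 0 T) (hb : b ∈ Icc 0 T) :
    IntervalIntegrable (fun s => ⟪(A s x).1, deriv (fun τ => (A τ x').2 - (A τ x).2) s⟫_ℝ
      + ⟪(A s x').2 - (A s x).2, deriv (fun τ => (A τ x).1) s⟫_ℝ) volume a b := by
  have hcurve {z : E n} (hz : z ∈ C) := (h.lipschitzOnWith_curve hz).mono (uIcc_subset_Icc ha hb)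
  have hp := LipschitzWith.prod_fst.comp_lipschitzOnWith (hcurve hx)
  have hq := (LipschitzWith.prod_snd.comp_lipschitzOnWith (hcurve hx')).sub
    (LipschitzWith.prod_snd.comp_lipschitzOnWith (hcurve hx))
  exact (intervalIntegrable_inner_deriv hp.continuousOn hq).add
    (intervalIntegrable_inner_deriv hq.continuousOn hp)

lemma ae_cartanRemainder_eq (h : HamiltonianTube T Ω H K C A) (hx : x ∈ C)
    (hx' : x' ∈ C) :
    ∀ᵐ s, s ∈ Icc 0 T →
      cartanRemainder (H s) (A s x) (A s x') =
        (⟪(A s x').1, deriv (fun τ => (A τ x').2) s⟫_ℝ - H s (A s x'))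
          - (⟪(A s x).1, deriv (fun τ => (A τ x).2) s⟫_ℝ - H s (A s x))
          - (⟪(A s x).1, deriv (fun τ => (A τ x').2 - (A τ x).2) s⟫_ℝ
            + ⟪(A s x').2 - (A s x).2, deriv (fun τ => (A τ x).1) s⟫_ℝ) := by
  filter_upwards [h.ae_hasDerivAt x hx, h.ae_hasDerivAt x' hx'] with s hs hs' hsI
  have hfst : HasDerivAt (fun τ => (A τ x).1) (hamVF (H s) (A s x)).1 s :=
    (ContinuousLinearMap.fst ℝ (E n) (E n)).hasFDerivAt.comp_hasDerivAt s (hs hsI)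
  have hsnd : HasDerivAt (fun τ => (A τ x).2) (hamVF (H s) (A s x)).2 s :=
    (ContinuousLinearMap.snd ℝ (E n) (E n)).hasFDerivAt.comp_hasDerivAt s (hs hsI)
  have hsnd' : HasDerivAt (fun τ => (A τ x').2) (hamVF (H s) (A s x')).2 s :=
    (ContinuousLinearMap.snd ℝ (E n) (E n)).hasFDerivAt.comp_hasDerivAt s (hs' hsI)
  rw [hfst.deriv, (hsnd'.fun_sub hsnd).deriv, hsnd.deriv, hsnd'.deriv, cartanRemainder,
    real_inner_comm (hamVF (H s) (A s x)).1]
  simp only [inner_sub_left, inner_sub_right]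
  ring

lemma intervalIntegrable_cartanRemainder (h : HamiltonianTube T Ω H K C A) (hx : x ∈ C)
    (hx' : x' ∈ C) (ha : a ∈ Icc 0 T) (hb : b ∈ Icc 0 T) :
    IntervalIntegrable (fun s => cartanRemainder (H s) (A s x) (A s x')) volume a b := by
  have hint {z : E n} (hz : z ∈ C) := h.intervalIntegrable_action (y := fun _ => z)
    (LipschitzWith.const z).lipschitzOnWith (fun _ _ => hz) ha hb
  refine (((hint hx').sub (hint hx)).sub
    (h.intervalIntegrable_inner_deriv_curve_sub hx hx' ha hb)).congr_ae ?_
  rw [EventuallyEq, ae_restrict_iff' measurableSet_uIoc]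
  filter_upwards [h.ae_cartanRemainder_eq hx hx'] with s hs hsI
  exact (hs (uIcc_subset_Icc ha hb (uIoc_subset_uIcc hsI))).symm

lemma integral_cartanRemainder (h : HamiltonianTube T Ω H K C A) (hx : x ∈ C) (hx' : x' ∈ C)
    (ha : a ∈ Icc 0 T) (hb : b ∈ Icc 0 T) :
    ∫ s in a..b, cartanRemainder (H s) (A s x) (A s x') =
      action H (fun s => A s x') a b - action H (fun s => A s x) a b
        - (⟪(A b x).1, (A b x').2 - (A b x).2⟫_ℝ - ⟪(A a x).1, (A a x').2 - (A a x).2⟫_ℝ) := by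
  have hint {z : E n} (hz : z ∈ C) := h.intervalIntegrable_action (y := fun _ => z)
    (LipschitzWith.const z).lipschitzOnWith (fun _ _ => hz) ha hb
  have hcurve {z : E n} (hz : z ∈ C) := (h.lipschitzOnWith_curve hz).mono (uIcc_subset_Icc ha hb)
  have hparts := integral_inner_deriv_add_inner_deriv
    (LipschitzWith.prod_fst.comp_lipschitzOnWith (hcurve hx))
    ((LipschitzWith.prod_snd.comp_lipschitzOnWith (hcurve hx')).sub
      (LipschitzWith.prod_snd.comp_lipschitzOnWith (hcurve hx)))
  simp only [Function.comp_def] at hparts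
  rw [action, action, ← intervalIntegral.integral_sub (hint hx') (hint hx), ← hparts,
    ← intervalIntegral.integral_sub ((hint hx').sub (hint hx))
      (h.intervalIntegrable_inner_deriv_curve_sub hx hx' ha hb)]
  refine intervalIntegral.integral_congr_ae ?_
  filter_upwards [h.ae_cartanRemainder_eq hx hx'] with s hs hsI
  exact hs (uIcc_subset_Icc ha hb (uIoc_subset_uIcc hsI))

lemma ae_abs_cartanRemainder_le (h : HamiltonianTube T Ω H K C A) :
    ∀ᵐ t, t ∈ Icc 0 T → ∀ x ∈ C, ∀ x' ∈ C,
      |cartanRemainder (H t) (A t x) (A t x')| ≤ (4 * K + 1) * K * ‖x' - x‖ := by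
  filter_upwards [h.ae_norm_hamVF_le, h.ae_abs_ham_sub_le] with t hVF hham ht x hx x' hx'
  calc |cartanRemainder (H t) (A t x) (A t x')|
      ≤ (‖hamVF (H t) (A t x')‖ + ‖hamVF (H t) (A t x)‖) * ‖A t x' - A t x‖
          + |H t (A t x') - H t (A t x)| := abs_cartanRemainder_le _
    _ ≤ (K + K) * (K * ‖x' - x‖) + (2 * K + 1) * K * ‖x' - x‖ := by
        gcongr
        · exact hVF ht x' hx'
        · exact hVF ht x hx
        · exact (h.lipschitzOnWith_slice ht).norm_sub_le hx' hx
        · exact hham ht x hx x' hx'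
    _ = (4 * K + 1) * K * ‖x' - x‖ := by ring

lemma hasFDerivAt_integral_cartanRemainder (h : HamiltonianTube T Ω H K C A) (hx : x ∈ C)
    (ht : t ∈ Icc 0 T) :
    HasFDerivAt (fun x' => ∫ s in t..T, cartanRemainder (H s) (A s x) (A s x'))
      (0 : E n →L[ℝ] ℝ) x := by
  have hTI : T ∈ Icc 0 T := right_mem_Icc.2 (ht.1.trans ht.2)
  have hsub : Ioc t T ⊆ Icc 0 T := fun s hs => ⟨ht.1.trans hs.1.le, hs.2⟩
  have hC : C ∈ 𝓝 x := h.isOpen_base.mem_nhds hx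
  have hint {x'} (hx' : x' ∈ C) :=
    (intervalIntegrable_iff_integrableOn_Ioc_of_le ht.2).1
      (h.intervalIntegrable_cartanRemainder hx hx' ht hTI)
  have hself : ∀ s, cartanRemainder (H s) (A s x) (A s x) = 0 := by simp [cartanRemainder]
  simp only [intervalIntegral.integral_of_le ht.2]
  have key := hasFDerivAt_integral_of_dominated_loc_of_lip' (𝕜 := ℝ)
    (F' := fun _ => (0 : E n →L[ℝ] ℝ)) hC (fun x' hx' => (hint hx').aestronglyMeasurable)
    (hint hx) aestronglyMeasurable_const (bound := fun _ => (4 * K + 1) * K) ?_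
    (integrable_const _) ?_
  · simpa using key.2
  · rw [ae_restrict_iff' measurableSet_Ioc]
    filter_upwards [h.ae_abs_cartanRemainder_le] with s hs hsI x' hx'
    simpa [hself] using hs (hsub hsI) x hx x' hx'
  · rw [ae_restrict_iff' measurableSet_Ioc]
    refine .of_forall fun s hsI => ?_
    rw [← hasFDerivWithinAt_of_mem_nhds hC]
    exact hasFDerivWithinAt_zero_comp_of_lipschitzOnWith
      (hasFDerivAt_cartanRemainder h.isOpen_phase (h.contDiffOn_ham s (hsub hsI))
        (h.mem_phase s (hsub hsI) x hx)) (h.lipschitzOnWith_slice (hsub hsI)) hx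

lemma abs_integral_ham_curve_sub_ham_lift_le (h : HamiltonianTube T Ω H K C A)
    (hy : LipschitzOnWith L y (Icc 0 T)) (hyC : MapsTo y (Icc 0 T) C) (ha : a ∈ Icc 0 T)
    (hb : b ∈ Icc 0 T) :
    |(∫ s in a..b, H s (A s (y b))) - ∫ s in a..b, H s (A s (y s))|
      ≤ (2 * K + 1) * K * (L * |b - a|) * |b - a| := by
  have hsub : uIcc a b ⊆ Icc 0 T := uIcc_subset_Icc ha hb
  rw [← intervalIntegral.integral_sub
    (h.intervalIntegrable_ham (y := fun _ => y b) continuousOn_const (fun _ _ => hyC hb) ha hb)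
    (h.intervalIntegrable_ham hy.continuousOn hyC ha hb), ← Real.norm_eq_abs]
  refine intervalIntegral.norm_integral_le_of_norm_le_const_ae ?_
  filter_upwards [h.ae_abs_ham_sub_le] with s hham hs
  have hsI := uIoc_subset_uIcc hs
  refine (hham (hsub hsI) _ (hyC (hsub hsI)) _ (hyC hb)).trans ?_
  gcongr
  calc ‖y b - y s‖ ≤ L * |b - s| := hy.norm_sub_le hb (hsub hsI)
    _ ≤ L * |b - a| := by gcongr 1; exact abs_sub_right_of_mem_uIcc hsI

-- Both integrals of `p dx` are compared with that of the constant covector `(A t (y t)).1`.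
lemma exists_abs_action_curve_sub_action_lift_le (h : HamiltonianTube T Ω H K C A)
    (hy : LipschitzOnWith L y (Icc 0 T)) (hyC : MapsTo y (Icc 0 T) C) :
    ∃ B, ∀ t ∈ Icc 0 T, ∀ r ∈ Icc 0 T,
      |action H (fun s => A s (y r)) t r - action H (fun s => A s (y s)) t r
        + ⟪(A t (y t)).1, (A t (y r)).2 - (A t (y t)).2⟫_ℝ| ≤ B * |r - t| ^ 2 := by
  set M : ℝ≥0 := K * max 1 L with hM
  refine ⟨M * K + M * M + (2 * K + 1) * K * L, fun t ht r hr => ?_⟩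
  have hsub : uIcc t r ⊆ Icc 0 T := uIcc_subset_Icc ht hr
  have hclose {s σ : ℝ} (hs : s ∈ uIcc t r) (hσ : σ ∈ uIcc t r) :
      ‖(A s (y σ)).1 - (A t (y t)).1‖ ≤ M * |r - t| :=
    (norm_fst_le (A s (y σ) - A t (y t))).trans <|
      norm_sub_le_of_lipschitzOnWith_uncurry h.lipschitz hy hyC ht (hsub hs) (hsub hσ)
        (abs_sub_left_of_mem_uIcc hs) (abs_sub_left_of_mem_uIcc hσ)
  have hcurve := (h.lipschitzOnWith_curve (hyC hr)).mono hsub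
  have hlift := (h.lipschitzOnWith_lift hy hyC).mono hsub
  have hpdx_curve := abs_integral_inner_deriv_sub_inner_le
    (continuous_fst.comp_continuousOn hcurve.continuousOn)
    (LipschitzWith.prod_snd.comp_lipschitzOnWith hcurve) fun s hs => hclose hs right_mem_uIcc
  have hpdx_lift := abs_integral_inner_deriv_sub_inner_le
    (continuous_fst.comp_continuousOn hlift.continuousOn)
    (LipschitzWith.prod_snd.comp_lipschitzOnWith hlift) fun s hs => hclose hs hs
  have hham := h.abs_integral_ham_curve_sub_ham_lift_le hy hyC ht hr
  simp only [Function.comp_def, one_mul, ← hM, inner_sub_right] at hpdx_curve hpdx_lift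
  rw [action, action, intervalIntegral.integral_sub (h.intervalIntegrable_inner_deriv_lift
      (y := fun _ => y r) (LipschitzWith.const _).lipschitzOnWith (fun _ _ => hyC hr) ht hr)
      (h.intervalIntegrable_ham (y := fun _ => y r) continuousOn_const (fun _ _ => hyC hr) ht hr),
    intervalIntegral.integral_sub (h.intervalIntegrable_inner_deriv_lift hy hyC ht hr)
      (h.intervalIntegrable_ham hy.continuousOn hyC ht hr), inner_sub_right]
  rw [abs_le] at hpdx_curve hpdx_lift hham ⊢
  constructor <;> linarith

end HamiltonianTube

/-- The point of the Lagrangian submanifold `Λ = {(-∇c(x), x)}` above `x`. -/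
def costLift {n : ℕ} (c : E n → ℝ) (x : E n) : E n × E n := (-gradient c x, x)

/-- The function `W` with `dW = p dx - H dt` on the tube swept out by the curves `s ↦ A s x`,
normalised by `W T = -c`; the point `A t x` of the tube is labelled by `(t, x)`. -/
def generatingFunction {n : ℕ} (c : E n → ℝ) (H : ℝ → E n × E n → ℝ) (A : ℝ → E n → E n × E n)
    (T t : ℝ) (x : E n) : ℝ :=
  -c x - action H (fun s => A s x) t T

namespace HamiltonianTube

variable {n : ℕ} {T : ℝ} {Ω : Set (E n × E n)} {H : ℝ → E n × E n → ℝ} {K L : ℝ≥0}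
  {C : Set (E n)} {A : ℝ → E n → E n × E n} {y : ℝ → E n} {x : E n} {t : ℝ} {c : E n → ℝ}

lemma hasFDerivAt_generatingFunction_sub_inner (h : HamiltonianTube T Ω H K C A)
    (hc : ∀ x ∈ C, DifferentiableAt ℝ c x) (hAT : ∀ x ∈ C, A T x = costLift c x) (hx : x ∈ C)
    (ht : t ∈ Icc 0 T) :
    HasFDerivAt (fun x' => generatingFunction c H A T t x' - ⟪(A t x).1, (A t x').2⟫_ℝ)
      (0 : E n →L[ℝ] ℝ) x := by
  have hTI : T ∈ Icc 0 T := right_mem_Icc.2 (ht.1.trans ht.2)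
  have hcost : HasFDerivAt (fun x' => ⟪gradient c x, x'⟫_ℝ - c x') (0 : E n →L[ℝ] ℝ) x := by
    have hsub := ((InnerProductSpace.toDual ℝ (E n) (gradient c x)).hasFDerivAt (x := x)).fun_sub
      (hc x hx).hasGradientAt.hasFDerivAt
    rwa [sub_self] at hsub
  have hexpand : (fun x' => generatingFunction c H A T t x' - ⟪(A t x).1, (A t x').2⟫_ℝ)
      =ᶠ[𝓝 x] fun x' => (⟪gradient c x, x'⟫_ℝ - c x')
        - (∫ s in t..T, cartanRemainder (H s) (A s x) (A s x'))
        - (action H (fun s => A s x) t T + ⟪gradient c x, x⟫_ℝ + ⟪(A t x).1, (A t x).2⟫_ℝ) := by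
    filter_upwards [h.isOpen_base.mem_nhds hx] with x' hx'
    rw [h.integral_cartanRemainder hx hx' ht hTI, hAT x hx, hAT x' hx', generatingFunction]
    simp only [costLift, inner_sub_right, inner_neg_left]
    ring
  refine HasFDerivAt.congr_of_eventuallyEq ?_ hexpand
  simpa using (hcost.sub (h.hasFDerivAt_integral_cartanRemainder hx ht)).sub_const
    (action H (fun s => A s x) t T + ⟪gradient c x, x⟫_ℝ + ⟪(A t x).1, (A t x).2⟫_ℝ)

lemma generatingFunction_sub_eq_action (h : HamiltonianTube T Ω H K C A) (hx : x ∈ C) {r : ℝ}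
    (ht : t ∈ Icc 0 T) (hr : r ∈ Icc 0 T) :
    generatingFunction c H A T r x - generatingFunction c H A T t x =
      action H (fun s => A s x) t r := by
  have hadd := h.action_add_adjacent (y := fun _ => x) (LipschitzWith.const x).lipschitzOnWith
    (fun _ _ => hx) ht hr (right_mem_Icc.2 (ht.1.trans ht.2))
  simp only [generatingFunction]
  linarith

lemma hasDerivWithinAt_generatingFunction_sub_action (h : HamiltonianTube T Ω H K C A)
    (hc : ∀ x ∈ C, DifferentiableAt ℝ c x) (hAT : ∀ x ∈ C, A T x = costLift c x)
    (hy : LipschitzOnWith L y (Icc 0 T)) (hyC : MapsTo y (Icc 0 T) C) (ht : t ∈ Icc 0 T) :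
    HasDerivWithinAt (fun r => generatingFunction c H A T r (y r)
      - action H (fun s => A s (y s)) 0 r) 0 (Icc 0 T) t := by
  obtain ⟨B, hB⟩ := h.exists_abs_action_curve_sub_action_lift_le hy hyC
  set f : E n → ℝ := fun x => generatingFunction c H A T t x - ⟪(A t (y t)).1, (A t x).2⟫_ℝ with hf
  set g : ℝ → ℝ := fun r => action H (fun s => A s (y r)) t r - action H (fun s => A s (y s)) t r
    + ⟪(A t (y t)).1, (A t (y r)).2 - (A t (y t)).2⟫_ℝ with hg
  have hfy : HasFDerivWithinAt (fun r => f (y r)) (0 : ℝ →L[ℝ] ℝ) (Icc 0 T) t :=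
    hasFDerivWithinAt_zero_comp_of_lipschitzOnWith
      (h.hasFDerivAt_generatingFunction_sub_inner hc hAT (hyC ht) ht) hy ht
  have hgO : g =O[𝓝[Icc 0 T] t] fun r => ‖r - t‖ ^ 2 := by
    refine IsBigO.of_bound B ?_
    filter_upwards [self_mem_nhdsWithin] with r hr
    simpa using hB t ht r hr
  have hsum := hfy.fun_add (hgO.hasFDerivWithinAt ht one_lt_two)
  have hsplit : ∀ r ∈ Icc 0 T,
      generatingFunction c H A T r (y r) - action H (fun s => A s (y s)) 0 r =
        f (y r) + g r + (⟪(A t (y t)).1, (A t (y t)).2⟫_ℝ - action H (fun s => A s (y s)) 0 t) := by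
    intro r hr
    have hzero : (0 : ℝ) ∈ Icc 0 T := left_mem_Icc.2 (ht.1.trans ht.2)
    simp only [hf, hg, inner_sub_right]
    linarith [h.generatingFunction_sub_eq_action (c := c) (hyC hr) ht hr,
      h.action_add_adjacent hy hyC hzero ht hr]
  rw [hasDerivWithinAt_iff_hasFDerivWithinAt]
  refine HasFDerivWithinAt.congr ?_ hsplit (hsplit t ht)
  simpa using hsum

theorem action_lift_eq_action_curve_add_cost_sub (h : HamiltonianTube T Ω H K C A) (hT : 0 ≤ T)
    (hc : ∀ x ∈ C, DifferentiableAt ℝ c x) (hAT : ∀ x ∈ C, A T x = costLift c x)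
    (hy : LipschitzOnWith L y (Icc 0 T)) (hyC : MapsTo y (Icc 0 T) C) :
    action H (fun s => A s (y s)) 0 T =
      action H (fun s => A s (y 0)) 0 T + c (y 0) - c (y T) := by
  have hderiv {t : ℝ} (ht : t ∈ Icc 0 T) :=
    h.hasDerivWithinAt_generatingFunction_sub_action hc hAT hy hyC ht
  have hconst := constant_of_derivWithin_zero (fun t ht => (hderiv ht).differentiableWithinAt)
    (fun t ht => (hderiv (Ico_subset_Icc_self ht)).derivWithin
      (uniqueDiffOn_Icc (ht.1.trans_lt ht.2) t (Ico_subset_Icc_self ht))) T (right_mem_Icc.2 hT)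
  simp only [generatingFunction, action, intervalIntegral.integral_same] at hconst ⊢
  linarith

end HamiltonianTube

section Optimality

variable {n : ℕ} {T : ℝ} {H : ℝ → E n × E n → ℝ} {c : E n → ℝ} {O : Set (E n)}
  {𝓗 : ℝ → E n × E n → E n × E n}

lemma action_nonpos {lam : ℝ → E n × E n} {η : ℝ → E n} (hT : 0 ≤ T)
    (hlam : ∀ t ∈ Icc 0 T, (lam t).2 = η t)
    (hmax : ∀ᵐ t, t ∈ Ioo 0 T → ⟪(lam t).1, deriv η t⟫_ℝ ≤ H t (lam t)) :
    action H lam 0 T ≤ 0 := by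
  refine intervalIntegral.integral_of_le hT |>.trans_le (integral_nonpos_of_ae ?_)
  rw [EventuallyLE, ae_restrict_iff' measurableSet_Ioc]
  filter_upwards [hmax, ae_deriv_eq_of_eqOn_Icc hlam, ae_mem_Ioo_of_mem_Icc 0 T]
    with t hmax hderiv hmem ht
  rw [hderiv (Ioc_subset_Icc_self ht)]
  exact sub_nonpos.2 (hmax (hmem (Ioc_subset_Icc_self ht)))

lemma action_eq_zero {lam : ℝ → E n × E n} {ξ : ℝ → E n} (hT : 0 ≤ T)
    (hlam : ∀ t ∈ Icc 0 T, (lam t).2 = ξ t)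
    (hmax : ∀ᵐ t, t ∈ Ioo 0 T → H t (lam t) = ⟪(lam t).1, deriv ξ t⟫_ℝ) :
    action H lam 0 T = 0 := by
  refine intervalIntegral.integral_zero_ae ?_
  rw [uIoc_of_le hT]
  filter_upwards [hmax, ae_deriv_eq_of_eqOn_Icc hlam, ae_mem_Ioo_of_mem_Icc 0 T]
    with t hmax hderiv hmem ht
  rw [hderiv (Ioc_subset_Icc_self ht)]
  exact sub_eq_zero.2 (hmax (hmem (Ioc_subset_Icc_self ht))).symm

lemma intervalIntegrable_ham_of_eq_inner_deriv {lam : ℝ → E n × E n} {ξ : ℝ → E n} {K : ℝ≥0}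
    (hT : 0 ≤ T) (hlam : LipschitzOnWith K lam (Icc 0 T))
    (hproj : ∀ t ∈ Icc 0 T, (lam t).2 = ξ t)
    (hmax : ∀ᵐ t, t ∈ Ioo 0 T → H t (lam t) = ⟪(lam t).1, deriv ξ t⟫_ℝ) :
    IntervalIntegrable (fun t => H t (lam t)) volume 0 T := by
  rw [← uIcc_of_le hT] at hlam
  have hinner := intervalIntegrable_inner_deriv (continuous_fst.comp_continuousOn hlam.continuousOn)
    (LipschitzWith.prod_snd.comp_lipschitzOnWith hlam)
  refine hinner.congr_ae ?_
  rw [EventuallyEq, ae_restrict_iff' measurableSet_uIoc, uIoc_of_le hT]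
  filter_upwards [hmax, ae_deriv_eq_of_eqOn_Icc hproj, ae_mem_Ioo_of_mem_Icc 0 T]
    with t hmax hderiv hmem ht
  rw [hmax (hmem (Ioc_subset_Icc_self ht)), ← hderiv (Ioc_subset_Icc_self ht)]
  rfl

lemma contDiffOn_costLift (hO : IsOpen O) (hc : ContDiffOn ℝ 2 c O) :
    ContDiffOn ℝ 1 (costLift c) O :=
  ((InnerProductSpace.toDual ℝ (E n)).symm.contDiff.comp_contDiffOn
    (hc.fderiv_of_isOpen hO (by norm_num))).neg.prodMk contDiffOn_id

lemma exists_lipschitzOnWith_flow_costLift {P : Set (E n)} (hO : IsOpen O)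
    (hc : ContDiffOn ℝ 2 c O) (hP : IsCompact P) (hPconv : Convex ℝ P) (hPO : P ⊆ O)
    (hflow : LocallyLipschitzOn (Icc 0 T ×ˢ (costLift c '' O)) (Function.uncurry 𝓗)) :
    ∃ K : ℝ≥0, LipschitzOnWith K (Function.uncurry fun t x => 𝓗 t (costLift c x))
      (Icc 0 T ×ˢ P) := by
  obtain ⟨K, hlift⟩ := ((contDiffOn_costLift hO hc).mono hPO).exists_lipschitzOnWith one_ne_zero
    hPconv hP
  exact exists_lipschitzOnWith_uncurry_comp isCompact_Icc hP
    (hflow.mono (prod_mono_right (image_mono hPO))) hlift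

lemma exists_hamiltonianTube {Ω : Set (E n × E n)} {S : Set (E n)} {x : E n} (hO : IsOpen O)
    (hOconv : Convex ℝ O) (hc : ContDiffOn ℝ 2 c O) (hΩ : IsOpen Ω)
    (hHmeas : ∀ ℓ ∈ Ω, Measurable fun t => H t ℓ) (hHC1 : ∀ t ∈ Icc 0 T, ContDiffOn ℝ 1 (H t) Ω)
    (hflowLip : LocallyLipschitzOn (Icc 0 T ×ˢ (costLift c '' O)) (Function.uncurry 𝓗))
    (hflowIn : ∀ x ∈ O, ∀ t ∈ Icc 0 T, 𝓗 t (costLift c x) ∈ Ω)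
    (hflowODE : ∀ x ∈ O, ∀ᵐ t, t ∈ Icc 0 T →
      HasDerivAt (fun s => 𝓗 s (costLift c x)) (hamVF (H t) (𝓗 t (costLift c x))) t)
    (hS : IsCompact S) (hSO : S ⊆ O) (hx : x ∈ S)
    (hint : IntervalIntegrable (fun t => H t (𝓗 t (costLift c x))) volume 0 T) :
    ∃ (K : ℝ≥0) (C : Set (E n)), S ⊆ C ∧ C ⊆ O ∧
      HamiltonianTube T Ω H K C fun t x => 𝓗 t (costLift c x) := by
  obtain ⟨P, hP, hPconv, hSP, hPO⟩ := exists_isCompact_convex_between hO hOconv hS hSO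
  obtain ⟨K, hK⟩ := exists_lipschitzOnWith_flow_costLift hO hc hP hPconv hPO hflowLip
  have hCO : interior P ⊆ O := interior_subset.trans hPO
  exact ⟨K, interior P, hSP, hCO,
    { isOpen_base := isOpen_interior
      convex_base := hPconv.interior
      isOpen_phase := hΩ
      measurable_ham := hHmeas
      contDiffOn_ham := hHC1
      mem_phase := fun t ht x hx => hflowIn x (hCO hx) t ht
      lipschitz := hK.mono (prod_mono_right interior_subset)
      ae_hasDerivAt := fun x hx => hflowODE x (hCO hx)
      exists_intervalIntegrable := ⟨x, hSP hx, hint⟩ }⟩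

lemma exists_lipschitz_pullback {U : Set (ℝ × E n)} {Φ : ℝ × E n → ℝ × (E n × E n)}
    (hleft : LeftInvOn Φ (fun q => (q.1, (𝓗 q.1 q.2).2)) (Icc 0 T ×ˢ (costLift c '' O)))
    (hsurj : SurjOn (fun q => (q.1, (𝓗 q.1 q.2).2)) (Icc 0 T ×ˢ (costLift c '' O)) U)
    (hΦ : LocallyLipschitzOn U Φ) {η : ℝ → E n} {K : ℝ≥0} (hη : LipschitzOnWith K η (Icc 0 T))
    (hηU : ∀ t ∈ Icc 0 T, (t, η t) ∈ U) :
    ∃ (L : ℝ≥0) (y : ℝ → E n), LipschitzOnWith L y (Icc 0 T) ∧ MapsTo y (Icc 0 T) O ∧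
      (∀ t ∈ Icc 0 T, (𝓗 t (costLift c (y t))).2 = η t) ∧
      ∀ t ∈ Icc 0 T, ∀ x ∈ O, (𝓗 t (costLift c x)).2 = η t → y t = x := by
  have hgraph : LipschitzOnWith (max 1 K) (fun t => (t, η t)) (Icc 0 T) :=
    LipschitzWith.id.lipschitzOnWith.prodMk hη
  obtain ⟨M, hM⟩ := (hΦ.mono (image_subset_iff.2 hηU)).exists_lipschitzOnWith_of_compact
    (isCompact_Icc.image_of_continuousOn hgraph.continuousOn)
  have hunique : ∀ t ∈ Icc 0 T, ∀ x ∈ O, (𝓗 t (costLift c x)).2 = η t →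
      (Φ (t, η t)).2.2 = x := by
    intro t ht x hx hxη
    have hΦx : Φ (t, (𝓗 t (costLift c x)).2) = (t, costLift c x) :=
      hleft (mk_mem_prod ht (mem_image_of_mem _ hx))
    rw [← hxη, hΦx, costLift]
  have hspec : ∀ t ∈ Icc 0 T, ∃ x ∈ O, (𝓗 t (costLift c x)).2 = η t := by
    intro t ht
    obtain ⟨⟨s, ℓ⟩, ⟨-, x, hx, rfl⟩, hq⟩ := hsurj (hηU t ht)
    obtain ⟨rfl, hxη⟩ := Prod.mk.inj hq
    exact ⟨x, hx, hxη⟩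
  refine ⟨_, fun t => (Φ (t, η t)).2.2, (LipschitzWith.prod_snd.comp LipschitzWith.prod_snd)
    |>.comp_lipschitzOnWith (hM.comp hgraph (mapsTo_image _ _)), fun t ht => ?_, fun t ht => ?_,
    hunique⟩
  all_goals
    obtain ⟨x, hx, hxη⟩ := hspec t ht
    simpa only [hunique t ht x hx hxη]

theorem overmaximised_flow_gives_local_optimality_general (𝒳 : E n → Set (E n)) (hT : 0 ≤ T)
    (hO : IsOpen O) (hOconv : Convex ℝ O) {xf : E n} (hxf : xf ∈ O) (hc : ContDiffOn ℝ 2 c O)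
    {Ω : Set (E n × E n)} (hΩ : IsOpen Ω) (hHmeas : ∀ ℓ ∈ Ω, Measurable fun t => H t ℓ)
    (hHC1 : ∀ t ∈ Icc 0 T, ContDiffOn ℝ 1 (H t) Ω)
    (hHmax : ∀ t ∈ Icc 0 T, ∀ ℓ ∈ Ω, ∀ v ∈ 𝒳 ℓ.2, ⟪ℓ.1, v⟫_ℝ ≤ H t ℓ)
    (hflowLip : LocallyLipschitzOn (Icc 0 T ×ˢ (costLift c '' O)) (Function.uncurry 𝓗))
    (hflowT : ∀ x ∈ O, 𝓗 T (costLift c x) = costLift c x)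
    (hflowIn : ∀ x ∈ O, ∀ t ∈ Icc 0 T, 𝓗 t (costLift c x) ∈ Ω)
    (hflowODE : ∀ x ∈ O, ∀ᵐ t, t ∈ Icc 0 T →
      HasDerivAt (fun s => 𝓗 s (costLift c x)) (hamVF (H t) (𝓗 t (costLift c x))) t)
    {ξ : ℝ → E n} (hproj : ∀ t ∈ Icc 0 T, (𝓗 t (costLift c xf)).2 = ξ t)
    (hrefmax : ∀ᵐ t, t ∈ Ioo 0 T →
      H t (𝓗 t (costLift c xf)) = ⟪(𝓗 t (costLift c xf)).1, deriv ξ t⟫_ℝ)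
    {U : Set (ℝ × E n)} {Φ : ℝ × E n → ℝ × (E n × E n)}
    (hsurj : SurjOn (fun q => (q.1, (𝓗 q.1 q.2).2)) (Icc 0 T ×ˢ (costLift c '' O)) U)
    (hleft : LeftInvOn Φ (fun q => (q.1, (𝓗 q.1 q.2).2)) (Icc 0 T ×ˢ (costLift c '' O)))
    (hΦ : LocallyLipschitzOn U Φ) {η : ℝ → E n} {K : ℝ≥0} (hη : LipschitzOnWith K η (Icc 0 T))
    (hη0 : η 0 = ξ 0) (hη𝒳 : ∀ᵐ t, t ∈ Ioo 0 T → deriv η t ∈ 𝒳 (η t))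
    (hηU : ∀ t ∈ Icc 0 T, (t, η t) ∈ U) :
    c (ξ T) ≤ c (η T) := by
  have h0I : (0 : ℝ) ∈ Icc 0 T := left_mem_Icc.2 hT
  have hTI : T ∈ Icc 0 T := right_mem_Icc.2 hT
  obtain ⟨L, y, hy, hyO, hyη, hyunique⟩ := exists_lipschitz_pullback hleft hsurj hΦ hη hηU
  have hy0 : y 0 = xf := hyunique 0 h0I xf hxf ((hproj 0 h0I).trans hη0.symm)
  have hint : IntervalIntegrable (fun t => H t (𝓗 t (costLift c xf))) volume 0 T := by
    obtain ⟨M, hM⟩ := exists_lipschitzOnWith_flow_costLift hO hc isCompact_singleton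
      (convex_singleton xf) (singleton_subset_iff.2 hxf) hflowLip
    have hlam : LipschitzOnWith _ (fun t => 𝓗 t (costLift c xf)) (Icc 0 T) :=
      lipschitzOnWith_diag_of_uncurry (f := fun t x => 𝓗 t (costLift c x)) hM
        (LipschitzWith.const xf).lipschitzOnWith fun _ _ => rfl
    exact intervalIntegrable_ham_of_eq_inner_deriv hT hlam hproj hrefmax
  obtain ⟨M, C, hyC, hCO, htube⟩ := exists_hamiltonianTube hO hOconv hc hΩ hHmeas hHC1 hflowLip
    hflowIn hflowODE (isCompact_Icc.image_of_continuousOn hy.continuousOn) hyO.image_subset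
    ⟨0, h0I, hy0⟩ hint
  have hidentity := htube.action_lift_eq_action_curve_add_cost_sub hT
    (fun x hx => (hc.contDiffAt (hO.mem_nhds (hCO hx))).differentiableAt two_ne_zero)
    (fun x hx => hflowT x (hCO hx)) hy (mapsTo_iff_image_subset.2 hyC)
  have hreference := action_eq_zero hT hproj hrefmax
  have hcompetitor := action_nonpos (H := H) hT hyη <| by
    filter_upwards [hη𝒳] with t hηt ht
    have ht' := Ioo_subset_Icc_self ht
    exact hHmax t ht' _ (hflowIn _ (hyO ht') t ht') _ ((hyη t ht').symm ▸ hηt ht)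
  have hξT : xf = ξ T := by rw [← hproj T hTI, hflowT xf hxf, costLift]
  have hηT : y T = η T := by rw [← hyη T hTI, hflowT _ (hyO hTI), costLift]
  rw [hy0, hξT, hηT] at hidentity
  rw [hξT] at hreference
  linarith

end Optimality

/-- **Theorem 4.1** (optimality assertion): if the projected overmaximised flow emanating
from the horizontal Lagrangian submanifold `Λ` is a homeomorphism onto a neighborhood `U`
of the graph of `ξ̂` with locally Lipschitz inverse, then every admissible trajectory with
graph in `U` has modified cost not smaller than that of `ξ̂`. -/
theorem overmaximised_flow_gives_local_optimality
    {n m : ℕ} (X : Fin m → (E n → E n)) (hX : ∀ i, ContDiff ℝ (⊤ : ℕ∞) (X i))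
    (x₀ : E n) (T : ℝ) (hT : 0 < T)
    (ξ : ℝ → E n) (hξadm : Admissible X x₀ T ξ)
    (xf : E n) (hxf : xf = ξ T)
    -- the modified cost and the Lagrangian submanifold Λ
    (O : Set (E n)) (hO : IsOpen O) (hOconv : Convex ℝ O) (hxfO : xf ∈ O)
    (c' : E n → ℝ) (hc'sm : ContDiffOn ℝ (⊤ : ℕ∞) c' O)
    -- the overmaximised Hamiltonian
    (Ω : Set (E n × E n)) (hΩ : IsOpen Ω)
    (H : ℝ → (E n × E n) → ℝ)
    (hHmeas : ∀ ℓ ∈ Ω, Measurable (fun t : ℝ => H t ℓ))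
    (hHC1 : ∀ t ∈ Icc 0 T, ContDiffOn ℝ 1 (H t) Ω)
    (hHmax : ∀ t ∈ Icc 0 T, ∀ ℓ ∈ Ω, ∀ v ∈ chull X ℓ.2, ⟪ℓ.1, v⟫_ℝ ≤ H t ℓ)
    -- the overmaximised flow 𝓗, from time T backwards in time
    (𝓗 : ℝ → (E n × E n) → E n × E n)
    (hflowLip : ∃ K : ℝ≥0, LipschitzOnWith K (fun q : ℝ × (E n × E n) => 𝓗 q.1 q.2)
      (Icc 0 T ×ˢ ((fun x => (-gradient c' x, x)) '' O)))
    (hflowT : ∀ x ∈ O, 𝓗 T (-gradient c' x, x) = (-gradient c' x, x))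
    (hflowIn : ∀ x ∈ O, ∀ t ∈ Icc 0 T, 𝓗 t (-gradient c' x, x) ∈ Ω)
    (hflowODE : ∀ x ∈ O, ∀ᵐ t, t ∈ Icc 0 T →
      HasDerivAt (fun s => 𝓗 s (-gradient c' x, x))
        (hamVF (H t) (𝓗 t (-gradient c' x, x))) t)
    -- behaviour along the reference extremal λ̂(t) = 𝓗_t(ℓ̂_f)
    (hproj : ∀ t ∈ Icc 0 T, (𝓗 t (-gradient c' xf, xf)).2 = ξ t)
    (hrefmax : ∀ᵐ t, t ∈ Ioo 0 T → ∃ v ∈ chull X (ξ t), HasDerivAt ξ v t ∧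
      H t (𝓗 t (-gradient c' xf, xf)) = ⟪(𝓗 t (-gradient c' xf, xf)).1, v⟫_ℝ)
    -- invertibility of the projected flow id × π𝓗 onto a neighborhood U of the graph
    (U : Set (ℝ × E n)) (V : Set (ℝ × E n)) (hV : IsOpen V)
    (hUV : U = V ∩ (Icc 0 T ×ˢ univ))
    (hUgraph : ∀ t ∈ Icc 0 T, (t, ξ t) ∈ U)
    (hbij : Set.BijOn (fun q : ℝ × (E n × E n) => (q.1, (𝓗 q.1 q.2).2))
      (Icc 0 T ×ˢ ((fun x => (-gradient c' x, x)) '' O)) U)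
    (Φ : ℝ × E n → ℝ × (E n × E n))
    (hΦinv : Set.InvOn Φ (fun q : ℝ × (E n × E n) => (q.1, (𝓗 q.1 q.2).2))
      (Icc 0 T ×ˢ ((fun x => (-gradient c' x, x)) '' O)) U)
    (hΦlip : ∀ y ∈ U, ∃ K : ℝ≥0, ∃ W ∈ nhdsWithin y U, LipschitzOnWith K Φ W) :
    -- conclusion: ξ̂ minimizes the modified cost among admissible trajectories in U
    ∀ η : ℝ → E n, Admissible X x₀ T η → (∀ t ∈ Icc 0 T, (t, η t) ∈ U) →
      c' (ξ T) ≤ c' (η T) := by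
  intro η ⟨⟨K, hη⟩, hη0, hη𝒳⟩ hηU
  obtain ⟨M, hM⟩ := hflowLip
  exact overmaximised_flow_gives_local_optimality_general (chull X) hT.le hO hOconv hxfO
    (hc'sm.of_le (by norm_cast)) hΩ hHmeas hHC1 hHmax
    (fun _ _ => ⟨M, _, self_mem_nhdsWithin, hM⟩) hflowT hflowIn hflowODE hproj
    (hrefmax.mono fun t ht htI => let ⟨_, _, hξ, hmax⟩ := ht htI; hξ.deriv ▸ hmax)
    hbij.surjOn hΦinv.1 hΦlip hη (hη0.trans hξadm.2.1.symm)
    (hη𝒳.mono fun t ht htI => let ⟨_, hv, hηt⟩ := ht htI; hηt.deriv ▸ hv) hηU
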